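/- For every a ∈ ℂ with |a| < 1 and every θ ∈ ℝ, the map φ_{a,θ}(z',z_n) := ((1−|a|²)^{1/2m₁}(1−\bar a z_n)^{−1/m₁} z₁, …, (1−|a|²)^{1/2m_{n−1}}(1−\bar a z_n)^{−1/m_{n−1}} z_{n−1}, e^{iθ}(z_n − a)/(1−\bar a z_n)), with principal-branch complex powers, is an automorphism of D_P: it is holomorphic and injective on D_P and maps D_P onto D_P. -/

import Mathlib

open Complex Metric Set

noncomputable section

/-- `ℂⁿ` with `n = N + 1`, carrying the Euclidean norm; points are written `z = (z', z_n)`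
with `z' ∈ ℂᴺ` the first `N` coordinates and `z_n` the last coordinate. -/
abbrev CSp (N : ℕ) : Type := EuclideanSpace ℂ (Fin (N + 1))

variable {N : ℕ}

/-- The last coordinate `z_n` of `z = (z', z_n)`. -/
def lastC (z : CSp N) : ℂ := z (Fin.last N)

/-- The first `N` coordinates `z'` of `z = (z', z_n)`. -/
def initC (z : CSp N) : Fin N → ℂ := fun j => z j.castSucc

/-- The point `(z', z_n) ∈ ℂⁿ`. -/
def mkPt (z' : Fin N → ℂ) (zn : ℂ) : CSp N := WithLp.toLp 2 (Fin.snoc z' zn)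

/-- The weight `wt(K) = Σ_j k_j / (2 m_j)` of a multi-index `K` with respect to
`Λ = (1/m₁, …, 1/m_N)`. -/
def wt (m : Fin N → ℕ) (K : Fin N → ℕ) : ℝ := ∑ j, (K j : ℝ) / (2 * m j)

/-- `P` is a real-valued weighted homogeneous polynomial of the form
`P(z') = Σ_{wt(K)=wt(L)=1/2} a_{KL} z'^K conj(z')^L` with `a_{KL} = conj (a_{LK})`. -/
def IsWHP (m : Fin N → ℕ) (P : (Fin N → ℂ) → ℝ) : Prop :=
  ∃ a : (Fin N → ℕ) → (Fin N → ℕ) → ℂ,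
    {q : (Fin N → ℕ) × (Fin N → ℕ) | a q.1 q.2 ≠ 0}.Finite ∧
    (∀ K L, a K L = starRingEnd ℂ (a L K)) ∧
    (∀ K L, a K L ≠ 0 → wt m K = 1 / 2 ∧ wt m L = 1 / 2) ∧
    (∀ z' : Fin N → ℂ, (P z' : ℂ) =
      ∑ᶠ K, ∑ᶠ L, a K L * (∏ j, z' j ^ K j) * ∏ j, starRingEnd ℂ (z' j) ^ L j)

/-- The general ellipsoid `D_P = {(z',z_n) : |z_n|² + P(z') < 1}`. -/
def DP (P : (Fin N → ℂ) → ℝ) : Set (CSp N) :=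
  {z | ‖lastC z‖ ^ 2 + P (initC z) < 1}

/-- The map `φ_{a,θ}(z',z_n) = ((1-|a|²)^{1/2m₁}(1-conj(a) z_n)^{-1/m₁} z₁, …,
e^{iθ}(z_n - a)/(1 - conj(a) z_n))`, with principal-branch complex powers. -/
def phiMap (m : Fin N → ℕ) (a : ℂ) (θ : ℝ) (z : CSp N) : CSp N :=
  mkPt (fun j => ((1 - ‖a‖ ^ 2 : ℝ) : ℂ) ^ (1 / (2 * (m j : ℂ))) *
          (1 - starRingEnd ℂ a * lastC z) ^ (-(1 / (m j : ℂ))) * initC z j)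
       (Complex.exp (θ * Complex.I) * ((lastC z - a) / (1 - starRingEnd ℂ a * lastC z)))

lemma whp_scale {m : Fin N → ℕ} (hm : ∀ j, 0 < m j) {P : (Fin N → ℂ) → ℝ} (hP : IsWHP m P)
    (u : ℂ) (z : Fin N → ℂ) :
    P (fun j => Complex.exp (u / (m j : ℂ)) * z j) = ‖Complex.exp u‖ ^ 2 * P z := by
  obtain ⟨a, -, -, hw, hPz⟩ := hP
  have key : ∀ K : Fin N → ℕ, wt m K = 1 / 2 →
      ∏ j, (Complex.exp (u / (m j : ℂ))) ^ K j = Complex.exp u := by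
    intro K hK
    have h1 : (∑ j, (K j : ℂ) / (m j : ℂ)) = 1 := by
      have h2 : (∑ j, (K j : ℝ) / (m j : ℝ)) = 1 := by
        have h3 : (∑ j, (K j : ℝ) / (m j : ℝ)) = 2 * wt m K := by
          unfold wt
          rw [Finset.mul_sum]
          refine Finset.sum_congr rfl fun j _ => ?_
          have : (m j : ℝ) ≠ 0 := by exact_mod_cast (hm j).ne'
          field_simp
        rw [h3, hK]; norm_num
      have h4 := congrArg (fun x : ℝ => (x : ℂ)) h2
      push_cast at h4
      exact h4
    calc ∏ j, (Complex.exp (u / (m j : ℂ))) ^ K j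
        = ∏ j, Complex.exp (u * ((K j : ℂ) / (m j : ℂ))) := by
          refine Finset.prod_congr rfl fun j _ => ?_
          rw [← Complex.exp_nat_mul]
          congr 1
          ring
      _ = Complex.exp u := by
          rw [← Complex.exp_sum, ← Finset.mul_sum, h1, mul_one]
  have : ((P (fun j => Complex.exp (u / (m j : ℂ)) * z j) : ℝ) : ℂ)
      = ((‖Complex.exp u‖ ^ 2 * P z : ℝ) : ℂ) := by
    rw [hPz]
    push_cast
    rw [hPz, ← smul_eq_mul, smul_finsum]
    refine finsum_congr fun K => ?_
    rw [smul_finsum]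
    refine finsum_congr fun L => ?_
    by_cases h0 : a K L = 0
    · simp [h0]
    obtain ⟨hK, hL⟩ := hw K L h0
    have hc : ∏ j, (starRingEnd ℂ (Complex.exp (u / (m j : ℂ)))) ^ L j
        = starRingEnd ℂ (Complex.exp u) := by
      rw [← key L hL, map_prod]
      simp
    simp only [map_mul, mul_pow, Finset.prod_mul_distrib, key K hK, hc, smul_eq_mul]
    rw [← Complex.mul_conj']
    ring
  exact_mod_cast this

lemma whp_zero {m : Fin N → ℕ} (hm : ∀ j, 0 < m j) {P : (Fin N → ℂ) → ℝ} (hP : IsWHP m P) :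
    P 0 = 0 := by
  have h := whp_scale hm hP (Real.log 2 : ℂ) 0
  have h2 : Complex.exp (Real.log 2 : ℂ) = 2 := by
    rw [← Complex.ofReal_exp, Real.exp_log (by norm_num)]; norm_num
  rw [h2] at h
  have h3 : (fun j => Complex.exp ((Real.log 2 : ℂ) / (m j : ℂ)) * (0 : Fin N → ℂ) j) = 0 := by
    ext j; simp
  rw [h3] at h
  norm_num at h
  linarith

lemma lastC_mkPt (z : Fin N → ℂ) (w : ℂ) : lastC (mkPt z w) = w := by
  simp [lastC, mkPt]

lemma initC_mkPt (z : Fin N → ℂ) (w : ℂ) : initC (mkPt z w) = z := by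
  ext j; simp [initC, mkPt]

lemma mkPt_eta (z : CSp N) : mkPt (initC z) (lastC z) = z := by
  ext i
  refine Fin.lastCases ?_ (fun j => ?_) i
  · simp [lastC, mkPt]
  · simp [initC, mkPt]

lemma den_re_pos {a w : ℂ} (ha : ‖a‖ < 1) (hw : ‖w‖ < 1) :
    0 < (1 - starRingEnd ℂ a * w).re := by
  have h1 : (starRingEnd ℂ a * w).re ≤ ‖starRingEnd ℂ a * w‖ := Complex.re_le_norm _
  rw [norm_mul, RCLike.norm_conj] at h1
  have : ‖a‖ * ‖w‖ < 1 := by nlinarith [norm_nonneg a, norm_nonneg w]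
  simp only [Complex.sub_re, Complex.one_re]
  linarith

lemma den_ne {a w : ℂ} (ha : ‖a‖ < 1) (hw : ‖w‖ < 1) : 1 - starRingEnd ℂ a * w ≠ 0 := by
  intro h
  have := den_re_pos ha hw
  rw [h] at this
  simp at this

lemma moeb_norm (a w : ℂ) : ‖1 - starRingEnd ℂ a * w‖ ^ 2 - ‖w - a‖ ^ 2
    = (1 - ‖a‖ ^ 2) * (1 - ‖w‖ ^ 2) := by
  simp only [← Complex.normSq_eq_norm_sq, Complex.normSq_apply]
  simp
  ring

lemma moeb_id {a w : ℂ} (ha : ‖a‖ < 1) (hw : ‖w‖ < 1) (θ : ℝ) :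
    1 - ‖Complex.exp (θ * Complex.I) * ((w - a) / (1 - starRingEnd ℂ a * w))‖ ^ 2
    = (1 - ‖a‖ ^ 2) / ‖1 - starRingEnd ℂ a * w‖ ^ 2 * (1 - ‖w‖ ^ 2) := by
  rw [norm_mul, Complex.norm_exp_ofReal_mul_I, one_mul, norm_div, div_pow]
  have h : ‖1 - starRingEnd ℂ a * w‖ ≠ 0 := norm_ne_zero_iff.2 (den_ne ha hw)
  have := moeb_norm a w
  generalize ‖1 - starRingEnd ℂ a * w‖ = d at *
  rw [div_mul_eq_mul_div, ← this]
  field_simp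

lemma coef_eq {a w : ℂ} (ha : ‖a‖ < 1) (hw : ‖w‖ < 1) (k : ℕ) :
    ((1 - ‖a‖ ^ 2 : ℝ) : ℂ) ^ (1 / (2 * (k : ℂ))) *
      (1 - starRingEnd ℂ a * w) ^ (-(1 / (k : ℂ)))
    = Complex.exp ((Complex.log ((1 - ‖a‖ ^ 2 : ℝ) : ℂ) / 2
        - Complex.log (1 - starRingEnd ℂ a * w)) / (k : ℂ)) := by
  have h1 : ((1 - ‖a‖ ^ 2 : ℝ) : ℂ) ≠ 0 := by
    have : (0 : ℝ) < 1 - ‖a‖ ^ 2 := by nlinarith [norm_nonneg a]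
    exact_mod_cast this.ne'
  rw [Complex.cpow_def_of_ne_zero h1, Complex.cpow_def_of_ne_zero (den_ne ha hw),
    ← Complex.exp_add]
  congr 1
  ring

lemma exp_norm {a w : ℂ} (ha : ‖a‖ < 1) (hw : ‖w‖ < 1) :
    ‖Complex.exp (Complex.log ((1 - ‖a‖ ^ 2 : ℝ) : ℂ) / 2
        - Complex.log (1 - starRingEnd ℂ a * w))‖ ^ 2
    = (1 - ‖a‖ ^ 2) / ‖1 - starRingEnd ℂ a * w‖ ^ 2 := by
  have h0 : (0 : ℝ) < 1 - ‖a‖ ^ 2 := by nlinarith [norm_nonneg a]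
  have h1 : ((1 - ‖a‖ ^ 2 : ℝ) : ℂ) ≠ 0 := by exact_mod_cast h0.ne'
  rw [Complex.exp_sub, Complex.exp_log (den_ne ha hw), norm_div, div_pow, ← norm_pow,
    ← Complex.exp_nat_mul]
  congr 1
  have : ((2 : ℕ) : ℂ) * (Complex.log ((1 - ‖a‖ ^ 2 : ℝ) : ℂ) / 2)
      = Complex.log ((1 - ‖a‖ ^ 2 : ℝ) : ℂ) := by push_cast; ring
  rw [this, Complex.exp_log h1, Complex.norm_of_nonneg h0.le]

lemma phi_id {m : Fin N → ℕ} (hm : ∀ j, 0 < m j) {P : (Fin N → ℂ) → ℝ} (hP : IsWHP m P)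
    {a : ℂ} (ha : ‖a‖ < 1) (θ : ℝ) (z : CSp N) (hz : ‖lastC z‖ < 1) :
    1 - (‖lastC (phiMap m a θ z)‖ ^ 2 + P (initC (phiMap m a θ z)))
    = (1 - ‖a‖ ^ 2) / ‖1 - starRingEnd ℂ a * lastC z‖ ^ 2 *
      (1 - (‖lastC z‖ ^ 2 + P (initC z))) := by
  unfold phiMap
  rw [lastC_mkPt, initC_mkPt]
  simp only [coef_eq ha hz]
  rw [whp_scale hm hP, exp_norm ha hz]
  have := moeb_id ha hz θ
  linarith

lemma phi_mem_iff {m : Fin N → ℕ} (hm : ∀ j, 0 < m j) {P : (Fin N → ℂ) → ℝ} (hP : IsWHP m P)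
    {a : ℂ} (ha : ‖a‖ < 1) (θ : ℝ) (z : CSp N) (hz : ‖lastC z‖ < 1) :
    phiMap m a θ z ∈ DP P ↔ z ∈ DP P := by
  have h := phi_id hm hP ha θ z hz
  have h0 : (0 : ℝ) < 1 - ‖a‖ ^ 2 := by nlinarith [norm_nonneg a]
  have h1 : 0 < ‖1 - starRingEnd ℂ a * lastC z‖ := norm_pos_iff.2 (den_ne ha hz)
  have h2 : 0 < (1 - ‖a‖ ^ 2) / ‖1 - starRingEnd ℂ a * lastC z‖ ^ 2 := by positivity
  unfold DP
  rw [mem_ofPred_eq, mem_ofPred_eq, ← sub_pos, h, mul_pos_iff_of_pos_left h2, sub_pos]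

lemma last_lt {m : Fin N → ℕ} (hm : ∀ j, 0 < m j) {P : (Fin N → ℂ) → ℝ} (hP : IsWHP m P)
    (hPpos : ∀ z' : Fin N → ℂ, z' ≠ 0 → 0 < P z') {z : CSp N} (hz : z ∈ DP P) :
    ‖lastC z‖ < 1 := by
  have h : ‖lastC z‖ ^ 2 + P (initC z) < 1 := hz
  have h0 : 0 ≤ P (initC z) := by
    by_cases h0 : initC z = 0
    · rw [h0, whp_zero hm hP]
    · exact (hPpos _ h0).le
  nlinarith [norm_nonneg (lastC z)]

/-- For every `a ∈ ℂ` with `|a| < 1` and every `θ ∈ ℝ`, the map `φ_{a,θ}` is an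
automorphism of `D_P`: it is holomorphic and injective on `D_P` and maps `D_P` onto `D_P`. -/
theorem stmt9 {N : ℕ} (hN : 1 ≤ N) (m : Fin N → ℕ) (hm : ∀ j, 0 < m j)
    (P : (Fin N → ℂ) → ℝ) (hP : IsWHP m P)
    (hPpos : ∀ z' : Fin N → ℂ, z' ≠ 0 → 0 < P z')
    (a : ℂ) (ha : ‖a‖ < 1) (θ : ℝ) :
    DifferentiableOn ℂ (phiMap m a θ) (DP P) ∧ InjOn (phiMap m a θ) (DP P) ∧
    phiMap m a θ '' DP P = DP P := by
  have hlt : ∀ {z : CSp N}, z ∈ DP P → ‖lastC z‖ < 1 := fun hz => last_lt hm hP hPpos hz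
  refine ⟨?_, ?_, ?_⟩
  · intro z hz
    have hre := den_re_pos ha (hlt hz)
    have hne := den_ne ha (hlt hz)
    apply DifferentiableAt.differentiableWithinAt
    have hc : ∀ i : Fin (N + 1), DifferentiableAt ℂ (fun z : CSp N => z i) z := by
      intro i; fun_prop
    have hl : DifferentiableAt ℂ (fun z : CSp N => lastC z) z := hc _
    have hd : DifferentiableAt ℂ (fun z : CSp N => 1 - starRingEnd ℂ a * lastC z) z :=
      (differentiableAt_const _).sub ((differentiableAt_const _).mul hl)
    rw [differentiableAt_euclidean]
    intro i
    refine Fin.lastCases ?_ (fun j => ?_) i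
    · simp only [phiMap, mkPt, Fin.snoc_last]
      have hq : DifferentiableAt ℂ
          (fun z : CSp N => (lastC z - a) / (1 - starRingEnd ℂ a * lastC z)) z := by
        simp only [div_eq_mul_inv]
        exact (hl.sub (differentiableAt_const a)).mul
          ((differentiableAt_inv hne).comp z hd)
      exact (differentiableAt_const _).mul hq
    · simp only [phiMap, mkPt, Fin.snoc_castSucc]
      exact ((differentiableAt_const _).mul
        (hd.cpow (differentiableAt_const _) (Or.inl hre))).mul (hc _)
  · intro z hz w hw h
    have hz1 := hlt hz
    have hw1 := hlt hw
    have hl := congrArg lastC h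
    have hi := congrArg initC h
    unfold phiMap at hl hi
    rw [lastC_mkPt, lastC_mkPt] at hl
    rw [initC_mkPt, initC_mkPt] at hi
    have hl2 := mul_left_cancel₀ (Complex.exp_ne_zero _) hl
    rw [div_eq_div_iff (den_ne ha hz1) (den_ne ha hw1)] at hl2
    have haa := den_ne ha ha
    have hlast : lastC z = lastC w := by
      have : (1 - starRingEnd ℂ a * a) * (lastC z - lastC w) = 0 := by linear_combination hl2
      exact sub_eq_zero.1 ((mul_eq_zero.1 this).resolve_left haa)
    have hinit : initC z = initC w := by
      ext j
      have hj := congrFun hi j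
      simp only [coef_eq ha hw1, hlast] at hj
      exact mul_left_cancel₀ (Complex.exp_ne_zero _) hj
    rw [← mkPt_eta z, ← mkPt_eta w, hlast, hinit]
  · apply Subset.antisymm
    · rintro _ ⟨z, hz, rfl⟩
      exact (phi_mem_iff hm hP ha θ z (hlt hz)).2 hz
    · intro w hw
      have hw1 := hlt hw
      set t : ℂ := Complex.exp (-(θ * Complex.I)) * lastC w with ht
      have htn : ‖t‖ < 1 := by
        have : -((θ : ℂ) * Complex.I) = ((-θ : ℝ) : ℂ) * Complex.I := by push_cast; ring
        rw [ht, norm_mul, this, Complex.norm_exp_ofReal_mul_I, one_mul]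
        exact hw1
      have hna : ‖-a‖ < 1 := by rwa [norm_neg]
      have hden := den_ne hna htn
      set s : ℂ := (t - -a) / (1 - starRingEnd ℂ (-a) * t) with hs
      have hsn : ‖s‖ < 1 := by
        have h := moeb_id hna htn 0
        rw [← hs] at h
        have h0 : (0 : ℝ) < 1 - ‖-a‖ ^ 2 := by nlinarith [norm_nonneg (-a)]
        have h1 : 0 < ‖1 - starRingEnd ℂ (-a) * t‖ := norm_pos_iff.2 hden
        have h3 : (0 : ℝ) < 1 - ‖t‖ ^ 2 := by nlinarith [norm_nonneg t]
        have h2 : 0 < (1 - ‖-a‖ ^ 2) / ‖1 - starRingEnd ℂ (-a) * t‖ ^ 2 * (1 - ‖t‖ ^ 2) := by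
          positivity
        rw [← h] at h2
        simp only [Complex.ofReal_zero, zero_mul, Complex.exp_zero, one_mul] at h2
        nlinarith [norm_nonneg s]
      let z : CSp N := mkPt (fun j => (Complex.exp ((Complex.log ((1 - ‖a‖ ^ 2 : ℝ) : ℂ) / 2
        - Complex.log (1 - starRingEnd ℂ a * s)) / (m j : ℂ)))⁻¹ * initC w j) s
      have hzl : lastC z = s := lastC_mkPt _ _
      have hphi : phiMap m a θ z = w := by
        unfold phiMap
        rw [hzl]
        simp only [coef_eq ha hsn]
        conv_rhs => rw [← mkPt_eta w]
        congr 1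
        · ext j
          simp only [z, initC_mkPt]
          rw [mul_inv_cancel_left₀ (Complex.exp_ne_zero _)]
        · have hst : (s - a) / (1 - starRingEnd ℂ a * s) = t := by
            rw [div_eq_iff (den_ne ha hsn)]
            have : s * (1 - starRingEnd ℂ (-a) * t) = t - -a := by
              rw [hs, div_mul_cancel₀ _ hden]
            rw [map_neg] at this
            linear_combination this
          rw [hst, ht, ← mul_assoc, ← Complex.exp_add]
          simp
      refine ⟨z, ?_, hphi⟩
      rw [← phi_mem_iff hm hP ha θ z (by rw [hzl]; exact hsn), hphi]
      exact hw
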